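/- Ergodic frequency of state visits on μ-normal input: let (Q, A, q_I, δ) be a deterministic finite automaton, μ a positive Bernoulli measure on A, and V_q(n, X) the number of indices 0 ≤ i < n with δ*(q_I, X[0..i−1]) = q. Then for every q ∈ Q there exists π_q ≥ 0 such that for every μ-normal X ∈ A^ω, either V_q(n, X) is eventually constant, or V_q(n, X)/n → π_q with π_q > 0. -/

import Mathlib

open Filter Topology

/-- The prefix `X(0) X(1) ⋯ X(n-1)` of an infinite sequence, as a list. -/
def pref {A : Type*} (X : ℕ → A) (n : ℕ) : List A := (List.range n).map X

/-- Number of occurrences of the word `w` in the prefix `X[0..n]`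
(indices `i` with `0 ≤ i ≤ n - |w| + 1`). -/
def nbocc {A : Type*} [DecidableEq A] (w : List A) (X : ℕ → A) (n : ℕ) : ℕ :=
  ((Finset.range (n + 2 - w.length)).filter
    (fun i => (List.range w.length).map (fun j => X (i + j)) = w)).card

/-- Frequency of occurrences of `w` in `X[0..n]`. -/
noncomputable def freq {A : Type*} [DecidableEq A] (w : List A) (X : ℕ → A) (n : ℕ) : ℝ :=
  (nbocc w X n : ℝ) / ((n + 2 - w.length : ℕ) : ℝ)

/-- The Bernoulli measure of a word: product of the measures of its letters. -/
def wmeas {A : Type*} (μ : A → ℝ) (w : List A) : ℝ := (w.map μ).prod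

/-- `X` is `μ`-normal: every nonempty word occurs with asymptotic frequency `μ(w)`. -/
def BNormal {A : Type*} [DecidableEq A] (μ : A → ℝ) (X : ℕ → A) : Prop :=
  ∀ w : List A, w ≠ [] → Tendsto (fun n => freq w X n) atTop (𝓝 (wmeas μ w))

/-- Iterated transition function of a deterministic automaton. -/
def dstar {Q A : Type*} (δ : Q → A → Q) (q : Q) (w : List A) : Q := w.foldl δ q

/-- Capital of an automatic gambler started in state `q` after reading `w`. -/
def capital {Q A : Type*} (δ : Q → A → Q) (γ : Q → A → ℝ) : Q → List A → ℝ
  | _, [] => 1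
  | q, a :: w => γ q a * capital δ γ (δ q a) w

/-- Number of indices `i < n` at which the run of the automaton on `X` is in
state `q`. -/
def visits {Q A : Type*} [DecidableEq Q] (δ : Q → A → Q) (qI : Q) (X : ℕ → A)
    (q : Q) (n : ℕ) : ℕ :=
  ((Finset.range n).filter (fun i => dstar δ qI (pref X i) = q)).card

/-!
Reading the input is the dynamical system `(p, X) ↦ (δ p (X 0), shift X)`, and visit frequencies are
its Birkhoff averages. On a closed class of states the transition operator `P` of the Markov chain
driven by `μ` is irreducible, so every function `f` of the state solves a Poisson equation
`f = g - P g + c`, and the limit has to be `c`, provided that the averages of `g - P g` vanish. Look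
at the windows of length `k` of the input. Over a random word of length `k`, the sum of `g - P g`
along the run is up to a bounded term a martingale, so its second moment is `O(k)`. The state in
which a window is entered depends on the input, but summing the squares over all possible starting
states gives a function of the window alone, whose average is a second moment by normality. By
Cauchy–Schwarz the window sums are `O(√k)` on average, so the averages of `g - P g` are `O(1 / √k)`
for every `k`.

A state outside every closed class is left for good once the input contains a word that leads from
each state to one from which it is unreachable.
-/

section Birkhoff

variable {α β : Type*}

lemma birkhoffAverage_comp_of_semiconj (R : Type*) {M : Type*} [DivisionSemiring R]
    [AddCommMonoid M] [Module R M] {f : α → α} {g : β → β} {π : α → β}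
    (h : Function.Semiconj π f g) (φ : β → M) (n : ℕ) (x : α) :
    birkhoffAverage R f (φ ∘ π) n x = birkhoffAverage R g φ n (π x) := by
  simp only [birkhoffAverage, birkhoffSum, Function.comp_apply, (h.iterate_right _).eq]

lemma birkhoffAverage_mono {f : α → α} {φ ψ : α → ℝ} (h : φ ≤ ψ) (n : ℕ) (x : α) :
    birkhoffAverage ℝ f φ n x ≤ birkhoffAverage ℝ f ψ n x :=
  mul_le_mul_of_nonneg_left (Finset.sum_le_sum fun _ _ => h _) (by positivity)

lemma sq_birkhoffAverage_le (f : α → α) (φ : α → ℝ) (n : ℕ) (x : α) :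
    birkhoffAverage ℝ f φ n x ^ 2 ≤ birkhoffAverage ℝ f (φ ^ 2) n x := by
  simpa [birkhoffAverage, birkhoffSum, div_eq_inv_mul] using
    sum_div_card_sq_le_sum_sq_div_card (s := Finset.range n) (f := fun i => φ (f^[i] x))

variable {E : Type*} [NormedAddCommGroup E] [NormedSpace ℝ E] {f : α → α} {φ : α → E}

lemma tendsto_birkhoffAverage_iterate_sub (hφ : Bornology.IsBounded (Set.range φ)) (k : ℕ)
    (x : α) :
    Tendsto (fun n => birkhoffAverage ℝ f φ n (f^[k] x) - birkhoffAverage ℝ f φ n x)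
      atTop (𝓝 0) := by
  induction k with
  | zero => simp
  | succ k ih =>
    simpa [Function.iterate_succ_apply'] using
      (tendsto_birkhoffAverage_apply_sub_birkhoffAverage' ℝ hφ f (f^[k] x)).add ih

lemma tendsto_birkhoffAverage_iterate_iff (hφ : Bornology.IsBounded (Set.range φ)) (k : ℕ)
    (x : α) {l : E} :
    Tendsto (birkhoffAverage ℝ f φ · (f^[k] x)) atTop (𝓝 l) ↔
      Tendsto (birkhoffAverage ℝ f φ · x) atTop (𝓝 l) :=
  tendsto_iff_of_dist <| by
    simpa only [dist_eq_norm, norm_zero] using (tendsto_birkhoffAverage_iterate_sub hφ k x).norm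

lemma birkhoffAverage_birkhoffSum (f : α → α) (φ : α → E) (k n : ℕ) (x : α) :
    birkhoffAverage ℝ f (birkhoffSum f φ k) n x =
      ∑ j ∈ Finset.range k, birkhoffAverage ℝ f φ n (f^[j] x) := by
  simp only [birkhoffAverage, birkhoffSum, ← Finset.smul_sum]
  rw [Finset.sum_comm]
  simp only [← Function.iterate_add_apply, add_comm]

lemma tendsto_birkhoffAverage_birkhoffSum_sub (hφ : Bornology.IsBounded (Set.range φ)) (k : ℕ)
    (x : α) :
    Tendsto (fun n => birkhoffAverage ℝ f (birkhoffSum f φ k) n x -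
      (k : ℝ) • birkhoffAverage ℝ f φ n x) atTop (𝓝 0) := by
  simpa [birkhoffAverage_birkhoffSum, Finset.sum_sub_distrib, Nat.cast_smul_eq_nsmul] using
    tendsto_finsetSum (Finset.range k) fun j _ =>
      tendsto_birkhoffAverage_iterate_sub (f := f) hφ j x

lemma tendsto_birkhoffAverage_zero_of_blocks (hφ : Bornology.IsBounded (Set.range φ)) {x : α}
    (h : ∀ ε > 0, ∃ k : ℕ, 0 < k ∧
      ∀ᶠ n in atTop, ‖birkhoffAverage ℝ f (birkhoffSum f φ k) n x‖ ≤ k * ε) :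
    Tendsto (birkhoffAverage ℝ f φ · x) atTop (𝓝 0) := by
  rw [NormedAddGroup.tendsto_nhds_zero]
  intro ε hε
  obtain ⟨k, hk, hblock⟩ := h (ε / 2) (half_pos hε)
  have hk' : (0 : ℝ) < k := Nat.cast_pos.2 hk
  filter_upwards [hblock, NormedAddGroup.tendsto_nhds_zero.1
    (tendsto_birkhoffAverage_birkhoffSum_sub hφ k x) (k * (ε / 2)) (by positivity)]
    with n hblock_n hdiff
  set S := birkhoffAverage ℝ f (birkhoffSum f φ k) n x
  set a := birkhoffAverage ℝ f φ n x
  refine lt_of_mul_lt_mul_left ?_ hk'.le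
  calc k * ‖a‖ = ‖(k : ℝ) • a‖ := by rw [norm_smul, Real.norm_natCast]
    _ ≤ ‖S‖ + ‖S - (k : ℝ) • a‖ := norm_le_norm_add_norm_sub _ _
    _ < k * ε := by linarith

end Birkhoff

lemma isBounded_range_indicator_one {α : Type*} (s : Set α) :
    Bornology.IsBounded (Set.range (s.indicator (1 : α → ℝ))) :=
  (Set.toFinite {0, 1}).isBounded.subset <| by
    rintro _ ⟨x, rfl⟩
    by_cases hx : x ∈ s <;> simp [hx]

section Words

variable {A : Type*}

/-- The left shift on infinite words. -/
def shift (X : ℕ → A) : ℕ → A := fun n => X (n + 1)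

/-- The set of infinite words that begin with the finite word `w`. -/
def wordCylinder (w : List A) : Set (ℕ → A) := {X | pref X w.length = w}

lemma shift_iterate (X : ℕ → A) (m : ℕ) : shift^[m] X = fun n => X (m + n) := by
  induction m generalizing X with
  | zero => simp
  | succ m ih =>
    rw [Function.iterate_succ_apply, ih]
    simp only [shift, Nat.add_right_comm m]

lemma pref_succ (X : ℕ → A) (n : ℕ) : pref X (n + 1) = X 0 :: pref (shift X) n := by
  simp [pref, List.range_succ_eq_map, shift, Function.comp_def]

lemma pref_add (X : ℕ → A) (m n : ℕ) : pref X (m + n) = pref X m ++ pref (shift^[m] X) n := by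
  induction m generalizing X with
  | zero => simp [pref]
  | succ m ih =>
    rw [Nat.succ_add, pref_succ, ih, pref_succ, List.cons_append, Function.iterate_succ_apply]

lemma pref_eq_ofFn (X : ℕ → A) (n : ℕ) : pref X n = List.ofFn fun i : Fin n => X i := by
  simp [pref, List.ofFn_eq_map, ← List.map_coe_finRange_eq_range, Function.comp_def]

lemma wmeas_cons (μ : A → ℝ) (a : A) (w : List A) : wmeas μ (a :: w) = μ a * wmeas μ w := by
  simp [wmeas]

lemma wmeas_pos {μ : A → ℝ} (hμ : ∀ a, 0 < μ a) (w : List A) : 0 < wmeas μ w :=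
  List.prod_pos (by simp [hμ])

variable [Fintype A]

/-- The expectation of a function of a random word of length `k` whose letters are independent
with distribution `μ`. -/
noncomputable def wordMean (μ : A → ℝ) (k : ℕ) : (List A → ℝ) →ₗ[ℝ] ℝ :=
  ∑ v : Fin k → A, wmeas μ (List.ofFn v) • LinearMap.proj (List.ofFn v)

variable {μ : A → ℝ}

lemma wordMean_apply (k : ℕ) (F : List A → ℝ) :
    wordMean μ k F = ∑ v : Fin k → A, wmeas μ (List.ofFn v) * F (List.ofFn v) := by
  simp [wordMean]

lemma wordMean_zero (F : List A → ℝ) : wordMean μ 0 F = F [] := by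
  simp [wordMean_apply, wmeas]

lemma wordMean_succ (k : ℕ) (F : List A → ℝ) :
    wordMean μ (k + 1) F = ∑ a, μ a * wordMean μ k fun w => F (a :: w) := by
  rw [wordMean_apply, ← (Fin.consEquiv fun _ => A).sum_comp, Fintype.sum_prod_type]
  simp [wordMean_apply, Fin.consEquiv, wmeas_cons, Finset.mul_sum, mul_assoc]

lemma wordMean_const (hμ : ∑ a, μ a = 1) (k : ℕ) (c : ℝ) : wordMean μ k (fun _ => c) = c := by
  induction k with
  | zero => rw [wordMean_zero]
  | succ k ih => simp only [wordMean_succ, ih, ← Finset.sum_mul, hμ, one_mul]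

lemma wordMean_mono (hμ : ∀ a, 0 ≤ μ a) (k : ℕ) : Monotone (wordMean μ k) := by
  intro F G hFG
  simp only [wordMean_apply]
  gcongr with v
  · exact List.prod_nonneg (by simp [hμ])
  · exact hFG _

end Words

section Normal

variable {A : Type*} [DecidableEq A] {μ : A → ℝ} {X : ℕ → A}

lemma freq_eq_birkhoffAverage (w : List A) (X : ℕ → A) (n : ℕ) :
    freq w X n =
      birkhoffAverage ℝ shift ((wordCylinder w).indicator 1) (n + 2 - w.length) X := by
  simp [freq, nbocc, birkhoffAverage, birkhoffSum, wordCylinder, Set.indicator_apply, pref,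
    shift_iterate, div_eq_inv_mul]

lemma bNormal_iff_tendsto_birkhoffAverage :
    BNormal μ X ↔ ∀ w : List A, w ≠ [] →
      Tendsto (birkhoffAverage ℝ shift ((wordCylinder w).indicator 1) · X) atTop
        (𝓝 (wmeas μ w)) := by
  refine forall₂_congr fun w _ => ?_
  simp only [freq_eq_birkhoffAverage]
  constructor <;> intro h
  · refine (tendsto_add_atTop_iff_nat 2).1 ((h.comp (tendsto_add_atTop_nat w.length)).congr ?_)
    intro n
    simp only [Function.comp_apply]
    congr 1
    omega
  · exact h.comp ((tendsto_sub_atTop_nat w.length).comp (tendsto_add_atTop_nat 2))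

lemma BNormal.shift_iterate (hX : BNormal μ X) (m : ℕ) : BNormal μ (shift^[m] X) := by
  rw [bNormal_iff_tendsto_birkhoffAverage] at hX ⊢
  exact fun w hw =>
    (tendsto_birkhoffAverage_iterate_iff (isBounded_range_indicator_one _) m X).2 (hX w hw)

lemma BNormal.tendsto_birkhoffAverage_indicator (hX : BNormal μ X) (w : List A) :
    Tendsto (birkhoffAverage ℝ shift ((wordCylinder w).indicator 1) · X) atTop
      (𝓝 (wmeas μ w)) := by
  rcases eq_or_ne w [] with rfl | hw
  · have hone : (wordCylinder ([] : List A)).indicator (1 : (ℕ → A) → ℝ) = 1 := by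
      simp [wordCylinder, pref]
    rw [hone]
    refine tendsto_const_nhds.congr' ?_
    filter_upwards [eventually_ne_atTop 0] with n hn
    rw [birkhoffAverage_of_comp_eq ℝ rfl (Nat.cast_ne_zero.2 hn)]
    simp [wmeas]
  · exact bNormal_iff_tendsto_birkhoffAverage.1 hX w hw

lemma BNormal.exists_shift_mem_wordCylinder (hμ : ∀ a, 0 < μ a) (hX : BNormal μ X)
    (w : List A) : ∃ m, shift^[m] X ∈ wordCylinder w := by
  by_contra! hne
  have hzero : ∀ n, birkhoffAverage ℝ shift ((wordCylinder w).indicator 1) n X = (0 : ℝ) := by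
    simp [birkhoffAverage, birkhoffSum, hne]
  have hlim := hX.tendsto_birkhoffAverage_indicator w
  simp only [hzero] at hlim
  exact (wmeas_pos hμ w).ne (tendsto_nhds_unique tendsto_const_nhds hlim)

lemma BNormal.tendsto_birkhoffAverage_comp_pref [Fintype A] (hX : BNormal μ X) (k : ℕ)
    (F : List A → ℝ) :
    Tendsto (birkhoffAverage ℝ shift (fun Y => F (pref Y k)) · X) atTop
      (𝓝 (wordMean μ k F)) := by
  have hdecomp : ∀ Y, F (pref Y k) =
      ∑ v : Fin k → A, (wordCylinder (List.ofFn v)).indicator 1 Y * F (List.ofFn v) := by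
    simp [wordCylinder, Set.indicator_apply, pref_eq_ofFn]
  rw [wordMean_apply]
  refine (tendsto_finsetSum Finset.univ fun v _ =>
    (hX.tendsto_birkhoffAverage_indicator (List.ofFn v)).mul_const (F (List.ofFn v))).congr ?_
  intro n
  simp only [hdecomp, birkhoffAverage, birkhoffSum, smul_eq_mul, mul_assoc, Finset.sum_mul,
    ← Finset.mul_sum]
  rw [Finset.sum_comm]

end Normal

section Automaton

variable {Q A : Type*} (δ : Q → A → Q)

/-- Reading an infinite word with the automaton `δ`, as a dynamical system: one step consumes the
first letter and moves to the next state. -/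
def skewShift (y : Q × (ℕ → A)) : Q × (ℕ → A) := (δ y.1 (y.2 0), shift y.2)

/-- The sum of `ψ` over the states from which the letters of a word are read, when the automaton
`δ` starts in `p`; the terminal state is not counted. -/
def runSum (ψ : Q → ℝ) : Q → List A → ℝ
  | _, [] => 0
  | p, a :: w => ψ p + runSum ψ (δ p a) w

lemma dstar_cons (p : Q) (a : A) (w : List A) : dstar δ p (a :: w) = dstar δ (δ p a) w := rfl

lemma dstar_append (p : Q) (u v : List A) : dstar δ p (u ++ v) = dstar δ (dstar δ p u) v :=
  List.foldl_append

lemma skewShift_iterate (n : ℕ) (p : Q) (X : ℕ → A) :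
    (skewShift δ)^[n] (p, X) = (dstar δ p (pref X n), shift^[n] X) := by
  induction n generalizing p X with
  | zero => rfl
  | succ n ih =>
    rw [Function.iterate_succ_apply, skewShift, ih, pref_succ, dstar_cons,
      Function.iterate_succ_apply]

lemma birkhoffSum_skewShift (ψ : Q → ℝ) (k : ℕ) (p : Q) (X : ℕ → A) :
    birkhoffSum (skewShift δ) (ψ ∘ Prod.fst) k (p, X) = runSum δ ψ p (pref X k) := by
  induction k generalizing p X with
  | zero => rfl
  | succ k ih => rw [birkhoffSum_succ', pref_succ, runSum, skewShift, ih, Function.comp_apply]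

lemma visits_div_eq_birkhoffAverage [DecidableEq Q] (qI q : Q) (X : ℕ → A) (n : ℕ) :
    (visits δ qI X q n : ℝ) / n =
      birkhoffAverage ℝ (skewShift δ) (Pi.single q 1 ∘ Prod.fst) n (qI, X) := by
  simp [visits, birkhoffAverage, birkhoffSum, skewShift_iterate, Pi.single_apply,
    div_eq_inv_mul]

lemma sq_birkhoffAverage_birkhoffSum_skewShift_le [Fintype Q] (ψ : Q → ℝ) (k n : ℕ)
    (p : Q) (X : ℕ → A) :
    birkhoffAverage ℝ (skewShift δ) (birkhoffSum (skewShift δ) (ψ ∘ Prod.fst) k) n (p, X) ^ 2 ≤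
      birkhoffAverage ℝ shift (fun Y => ∑ r, runSum δ ψ r (pref Y k) ^ 2) n X := by
  have hle : birkhoffSum (skewShift δ) (ψ ∘ Prod.fst) k ^ 2 ≤
      (fun Y => ∑ r, runSum δ ψ r (pref Y k) ^ 2) ∘ Prod.snd := by
    rintro ⟨r, Y⟩
    rw [Pi.pow_apply, birkhoffSum_skewShift]
    exact Finset.single_le_sum (f := fun r => runSum δ ψ r (pref Y k) ^ 2)
      (fun _ _ => sq_nonneg _) (Finset.mem_univ r)
  have hsnd : Function.Semiconj Prod.snd (skewShift δ) shift := fun _ => rfl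
  calc _ ≤ _ := sq_birkhoffAverage_le _ _ _ _
    _ ≤ _ := birkhoffAverage_mono hle n (p, X)
    _ = _ := birkhoffAverage_comp_of_semiconj ℝ hsnd _ n (p, X)

lemma isBounded_range_comp_fst {β : Type*} [Finite Q] (ψ : Q → ℝ) :
    Bornology.IsBounded (Set.range (ψ ∘ (Prod.fst : Q × β → Q))) :=
  (Set.finite_range ψ).isBounded.subset (Set.range_comp_subset_range _ _)

end Automaton

section TransitionOperator

variable {Q A : Type*} [Fintype A]

/-- The transition operator of the Markov chain obtained by feeding the automaton `δ` independent
letters with distribution `μ`. -/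
noncomputable def transitionOperator (μ : A → ℝ) (δ : Q → A → Q) : (Q → ℝ) →ₗ[ℝ] (Q → ℝ) :=
  ∑ a, μ a • LinearMap.funLeft ℝ ℝ fun p => δ p a

variable {μ : A → ℝ} {δ : Q → A → Q}

lemma transitionOperator_apply (g : Q → ℝ) (p : Q) :
    transitionOperator μ δ g p = ∑ a, μ a * g (δ p a) := by
  simp [transitionOperator, LinearMap.funLeft_apply]

lemma transitionOperator_const (hμ : ∑ a, μ a = 1) (c : ℝ) :
    transitionOperator μ δ (fun _ => c) = fun _ => c := by
  funext p
  rw [transitionOperator_apply, ← Finset.sum_mul, hμ, one_mul]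

-- The process `runSum δ (g - P g) p w + g (dstar δ p w)` is a martingale in the letters of `w`.
lemma wordMean_runSum_add (hμ : ∑ a, μ a = 1) (g : Q → ℝ) (k : ℕ) (p : Q) :
    wordMean μ k (fun w => runSum δ (g - transitionOperator μ δ g) p w + g (dstar δ p w)) =
      g p := by
  set ψ := g - transitionOperator μ δ g with hψ
  induction k generalizing p with
  | zero => simp [wordMean_zero, runSum, dstar]
  | succ k ih =>
    have hletter : ∀ a, wordMean μ k
        (fun w => runSum δ ψ p (a :: w) + g (dstar δ p (a :: w))) = ψ p + g (δ p a) := by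
      intro a
      rw [← ih (δ p a), ← wordMean_const hμ k (ψ p), ← map_add]
      congr 1
      funext w
      simp only [runSum, dstar_cons, Pi.add_apply, add_assoc]
    simp only [wordMean_succ, hletter, mul_add, Finset.sum_add_distrib, ← Finset.sum_mul, hμ,
      one_mul, ← transitionOperator_apply]
    simp [hψ]

lemma wordMean_sq_runSum_add_le (hμ₀ : ∀ a, 0 ≤ μ a) (hμ : ∑ a, μ a = 1) {g : Q → ℝ} {G : ℝ}
    (hG : ∀ p, g p ^ 2 ≤ G) (k : ℕ) (p : Q) :
    wordMean μ k
      (fun w => (runSum δ (g - transitionOperator μ δ g) p w + g (dstar δ p w)) ^ 2) ≤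
        (k + 1) * G := by
  set ψ := g - transitionOperator μ δ g with hψ
  induction k generalizing p with
  | zero => simpa [wordMean_zero, runSum, dstar] using hG p
  | succ k ih =>
    set M : Q → List A → ℝ := fun p w => runSum δ ψ p w + g (dstar δ p w) with hM
    have hletter : ∀ a, wordMean μ k (fun w => M p (a :: w) ^ 2) ≤
        ψ p ^ 2 + 2 * ψ p * g (δ p a) + (k + 1) * G := by
      intro a
      have hsplit : (fun w => M p (a :: w) ^ 2) = (fun _ => ψ p ^ 2) +
          (2 * ψ p) • M (δ p a) + fun w => M (δ p a) w ^ 2 := by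
        funext w
        simp only [hM, runSum, dstar_cons, Pi.add_apply, Pi.smul_apply, smul_eq_mul]
        ring
      rw [hsplit, map_add, map_add, map_smul, wordMean_const hμ, wordMean_runSum_add hμ,
        smul_eq_mul]
      gcongr
      exact ih (δ p a)
    calc wordMean μ (k + 1) (fun w => M p w ^ 2)
        ≤ ∑ a, μ a * (ψ p ^ 2 + 2 * ψ p * g (δ p a) + (k + 1) * G) := by
          rw [wordMean_succ]
          gcongr with a
          · exact hμ₀ a
          · exact hletter a
      _ = ψ p ^ 2 + 2 * ψ p * transitionOperator μ δ g p + (k + 1) * G := by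
          simp only [mul_add, Finset.sum_add_distrib, ← Finset.sum_mul, hμ, one_mul,
            transitionOperator_apply, Finset.mul_sum, mul_left_comm]
      _ = g p ^ 2 - transitionOperator μ δ g p ^ 2 + (k + 1) * G := by
          simp only [hψ, Pi.sub_apply]
          ring
      _ ≤ ((k + 1 : ℕ) + 1) * G := by
          push_cast
          nlinarith [hG p, sq_nonneg (transitionOperator μ δ g p)]

lemma wordMean_sq_runSum_le (hμ₀ : ∀ a, 0 ≤ μ a) (hμ : ∑ a, μ a = 1) {g : Q → ℝ} {G : ℝ}
    (hG : ∀ p, g p ^ 2 ≤ G) (k : ℕ) (p : Q) :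
    wordMean μ k (fun w => runSum δ (g - transitionOperator μ δ g) p w ^ 2) ≤
      2 * (k + 2) * G := by
  set R := runSum δ (g - transitionOperator μ δ g) p
  have hle : (fun w => R w ^ 2) ≤
      (2 : ℝ) • ((fun w => (R w + g (dstar δ p w)) ^ 2) + fun _ => G) := by
    intro w
    simp only [Pi.smul_apply, Pi.add_apply, smul_eq_mul]
    nlinarith [hG (dstar δ p w), sq_nonneg (R w + 2 * g (dstar δ p w))]
  calc wordMean μ k (fun w => R w ^ 2)
      ≤ 2 * (wordMean μ k (fun w => (R w + g (dstar δ p w)) ^ 2) + G) := by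
        simpa only [map_smul, map_add, wordMean_const hμ, smul_eq_mul] using
          wordMean_mono hμ₀ k hle
    _ ≤ 2 * ((k + 1) * G + G) := by gcongr; exact wordMean_sq_runSum_add_le hμ₀ hμ hG k p
    _ = 2 * (k + 2) * G := by ring

lemma exists_wordMean_sum_sq_runSum_le [Fintype Q] (hμ₀ : ∀ a, 0 ≤ μ a) (hμ : ∑ a, μ a = 1)
    (g : Q → ℝ) :
    ∃ C, 0 ≤ C ∧ ∀ k : ℕ,
      wordMean μ k (fun w => ∑ p, runSum δ (g - transitionOperator μ δ g) p w ^ 2) ≤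
        C * (k + 2) := by
  have hG : ∀ p, g p ^ 2 ≤ ∑ r, g r ^ 2 := fun p =>
    Finset.single_le_sum (f := fun r => g r ^ 2) (fun _ _ => sq_nonneg _) (Finset.mem_univ p)
  refine ⟨Fintype.card Q * (2 * ∑ r, g r ^ 2), by positivity, fun k => ?_⟩
  set R := runSum δ (g - transitionOperator μ δ g)
  calc wordMean μ k (fun w => ∑ p, R p w ^ 2)
      = ∑ p, wordMean μ k (fun w => R p w ^ 2) := by
        rw [← map_sum]
        congr 1
        funext w
        rw [Finset.sum_apply]
    _ ≤ ∑ _p : Q, 2 * (k + 2) * ∑ r, g r ^ 2 :=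
        Finset.sum_le_sum fun p _ => wordMean_sq_runSum_le hμ₀ hμ hG k p
    _ = Fintype.card Q * (2 * ∑ r, g r ^ 2) * (k + 2) := by
        rw [Finset.sum_const, Finset.card_univ, nsmul_eq_mul]
        ring

variable [DecidableEq A] {X : ℕ → A}

theorem BNormal.tendsto_birkhoffAverage_sub_transitionOperator [Finite Q] (hμ₀ : ∀ a, 0 ≤ μ a)
    (hμ : ∑ a, μ a = 1) (hX : BNormal μ X) (g : Q → ℝ) (p : Q) :
    Tendsto (birkhoffAverage ℝ (skewShift δ) ((g - transitionOperator μ δ g) ∘ Prod.fst) · (p, X))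
      atTop (𝓝 0) := by
  have := Fintype.ofFinite Q
  set ψ := g - transitionOperator μ δ g
  set F : List A → ℝ := fun w => ∑ r, runSum δ ψ r w ^ 2
  obtain ⟨C, hC₀, hC⟩ := exists_wordMean_sum_sq_runSum_le (δ := δ) hμ₀ hμ g
  refine tendsto_birkhoffAverage_zero_of_blocks (isBounded_range_comp_fst ψ) fun ε hε => ?_
  obtain ⟨k, hk⟩ := exists_nat_gt (3 * C / ε ^ 2)
  have hk₀ : 0 < k := Nat.cast_pos.1 (lt_of_le_of_lt (by positivity) hk)
  have hmean : wordMean μ k F < (k * ε) ^ 2 := by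
    have hk₁ : (1 : ℝ) ≤ k := Nat.one_le_cast.2 hk₀
    rw [div_lt_iff₀ (by positivity)] at hk
    calc wordMean μ k F ≤ C * (k + 2) := hC k
      _ ≤ k * (3 * C) := by nlinarith
      _ < k * (k * ε ^ 2) := by gcongr
      _ = (k * ε) ^ 2 := by ring
  refine ⟨k, hk₀, ?_⟩
  filter_upwards [(hX.tendsto_birkhoffAverage_comp_pref k F).eventually_lt_const hmean]
    with n hn
  exact (abs_lt_of_sq_lt_sq
    ((sq_birkhoffAverage_birkhoffSum_skewShift_le δ ψ k n p X).trans_lt hn) (by positivity)).le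

end TransitionOperator

section StronglyConnected

variable {Q A : Type*}

/-- The state `r` is reached from `p` by reading some finite word. -/
def Reaches (δ : Q → A → Q) (p r : Q) : Prop := ∃ w, dstar δ p w = r

/-- Every state is reached from every other one: the Markov chain of the automaton under a positive
Bernoulli measure is irreducible. -/
def IsStronglyConnected (δ : Q → A → Q) : Prop := ∀ p r, Reaches δ p r

variable [Fintype A] {μ : A → ℝ} {δ : Q → A → Q}

lemma IsStronglyConnected.eq_of_transitionOperator_le [Finite Q] (hδ : IsStronglyConnected δ)
    (hμpos : ∀ a, 0 < μ a) (hμ : ∑ a, μ a = 1) {g : Q → ℝ} (hg : transitionOperator μ δ g ≤ g)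
    (p r : Q) : g p = g r := by
  have : Nonempty Q := ⟨p⟩
  obtain ⟨m, hm⟩ := Finite.exists_min g
  have hstep : ∀ s, g s = g m → ∀ a, g (δ s a) = g m := by
    intro s hs a
    have hnonneg : ∀ b ∈ Finset.univ, 0 ≤ μ b * (g (δ s b) - g m) := fun b _ =>
      mul_nonneg (hμpos b).le (sub_nonneg.2 (hm _))
    have hsum : ∑ b, μ b * (g (δ s b) - g m) = 0 := by
      refine le_antisymm ?_ (Finset.sum_nonneg hnonneg)
      have hgs := hg s
      rw [transitionOperator_apply] at hgs
      simp only [mul_sub, Finset.sum_sub_distrib, ← Finset.sum_mul, hμ, one_mul]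
      linarith
    have hzero := (Finset.sum_eq_zero_iff_of_nonneg hnonneg).1 hsum a (Finset.mem_univ a)
    exact sub_eq_zero.1 ((mul_eq_zero.1 hzero).resolve_left (hμpos a).ne')
  have hword : ∀ w s, g s = g m → g (dstar δ s w) = g m := by
    intro w
    induction w with
    | nil => exact fun _ hs => hs
    | cons a _ ih => exact fun s hs => ih _ (hstep s hs a)
  have hmin : ∀ s, g s = g m := by
    intro s
    obtain ⟨w, rfl⟩ := hδ m s
    exact hword w m rfl
  rw [hmin p, hmin r]

lemma IsStronglyConnected.exists_poisson [Finite Q] (hδ : IsStronglyConnected δ)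
    (hμpos : ∀ a, 0 < μ a) (hμ : ∑ a, μ a = 1) (f : Q → ℝ) :
    ∃ (g : Q → ℝ) (c : ℝ), f = g - transitionOperator μ δ g + fun _ => c := by
  rcases isEmpty_or_nonempty Q with hQ | ⟨⟨r⟩⟩
  · exact ⟨0, 0, Subsingleton.elim _ _⟩
  set P := transitionOperator μ δ
  -- `id - P` vanishes on constants; evaluation at `r` repairs injectivity, and `g r` becomes `c`.
  let Ψ : (Q → ℝ) →ₗ[ℝ] (Q → ℝ) := LinearMap.id - P + LinearMap.pi fun _ => LinearMap.proj r
  have eq_zero_of_nonpos : ∀ g, Ψ g = 0 → g r ≤ 0 → g = 0 := by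
    intro g hg hr
    have hpoint : ∀ p, g p - P g p + g r = 0 := congrFun hg
    have hconst : g = fun _ => g r := funext fun p =>
      hδ.eq_of_transitionOperator_le hμpos hμ (fun s => by linarith [hpoint s]) p r
    have hP : P g = g := by rw [hconst]; exact transitionOperator_const hμ _
    have hgr : g r = 0 := by simpa [hP] using hpoint r
    rw [hconst, hgr]
    rfl
  have hinj : Function.Injective Ψ := by
    rw [injective_iff_map_eq_zero]
    intro g hg
    rcases le_total (g r) 0 with hr | hr
    · exact eq_zero_of_nonpos g hg hr
    · exact neg_eq_zero.1 (eq_zero_of_nonpos (-g) (by rw [map_neg, hg, neg_zero]) (by simpa))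
  obtain ⟨g, hg⟩ := LinearMap.injective_iff_surjective.1 hinj f
  exact ⟨g, g r, hg.symm⟩

lemma IsStronglyConnected.poisson_const_pos [Finite Q] (hδ : IsStronglyConnected δ)
    (hμpos : ∀ a, 0 < μ a) (hμ : ∑ a, μ a = 1) {f g : Q → ℝ} {c : ℝ}
    (hfg : f = g - transitionOperator μ δ g + fun _ => c) (hf : 0 < f) : 0 < c := by
  by_contra! hc
  have hpoint : ∀ p, f p = g p - transitionOperator μ δ g p + c := congrFun hfg
  refine hf.not_ge fun p => ?_
  have hconst : g = fun _ => g p := funext fun s =>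
    hδ.eq_of_transitionOperator_le hμpos hμ
      (fun t => by linarith [hpoint t, show 0 ≤ f t from hf.le t]) s p
  have hP : transitionOperator μ δ g = g := by rw [hconst]; exact transitionOperator_const hμ _
  rw [hpoint, hP, sub_self, zero_add]
  exact hc

theorem IsStronglyConnected.exists_tendsto_birkhoffAverage [Finite Q] [DecidableEq A]
    (hδ : IsStronglyConnected δ) (hμpos : ∀ a, 0 < μ a) (hμ : ∑ a, μ a = 1) {f : Q → ℝ}
    (hf : 0 < f) :
    ∃ c : ℝ, 0 < c ∧ ∀ X, BNormal μ X → ∀ p,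
      Tendsto (birkhoffAverage ℝ (skewShift δ) (f ∘ Prod.fst) · (p, X)) atTop (𝓝 c) := by
  obtain ⟨g, c, hfg⟩ := hδ.exists_poisson hμpos hμ f
  refine ⟨c, hδ.poisson_const_pos hμpos hμ hfg hf, fun X hX p => ?_⟩
  have hlim := (hX.tendsto_birkhoffAverage_sub_transitionOperator (δ := δ)
    (fun a => (hμpos a).le) hμ g p).add_const c
  rw [zero_add] at hlim
  refine hlim.congr' ?_
  filter_upwards [eventually_ne_atTop 0] with n hn
  have hsplit : f ∘ Prod.fst =
      (g - transitionOperator μ δ g) ∘ Prod.fst + fun _ : Q × (ℕ → A) => c := by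
    rw [hfg]
    rfl
  have hconst : birkhoffAverage ℝ (skewShift δ) (fun _ => c) n = fun _ => c :=
    birkhoffAverage_of_comp_eq ℝ rfl (Nat.cast_ne_zero.2 hn)
  rw [hsplit, birkhoffAverage_add, Pi.add_apply, Pi.add_apply, hconst]

end StronglyConnected

section Recurrent

variable {Q A : Type*} {δ : Q → A → Q} {q : Q}

/-- The state `q` is reached from every state that it reaches, that is, `q` lies in a closed
communicating class. -/
def IsRecurrent (δ : Q → A → Q) (q : Q) : Prop := ∀ p, Reaches δ q p → Reaches δ p q

lemma Reaches.refl (δ : Q → A → Q) (p : Q) : Reaches δ p p := ⟨[], rfl⟩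

lemma Reaches.trans {p r s : Q} : Reaches δ p r → Reaches δ r s → Reaches δ p s := by
  rintro ⟨u, rfl⟩ ⟨v, rfl⟩
  exact ⟨u ++ v, dstar_append δ p u v⟩

lemma Reaches.step {p r : Q} (h : Reaches δ p r) (a : A) : Reaches δ p (δ r a) :=
  h.trans ⟨[a], rfl⟩

/-- The automaton `δ` restricted to the states that `q` reaches. -/
def reachableAutomaton (δ : Q → A → Q) (q : Q) (p : {p // Reaches δ q p}) (a : A) :
    {p // Reaches δ q p} :=
  ⟨δ p a, p.2.step a⟩

lemma coe_dstar_reachableAutomaton (p : {p // Reaches δ q p}) (w : List A) :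
    (dstar (reachableAutomaton δ q) p w).1 = dstar δ p w := by
  induction w generalizing p with
  | nil => rfl
  | cons _ _ ih => exact ih _

lemma IsRecurrent.isStronglyConnected (hq : IsRecurrent δ q) :
    IsStronglyConnected (reachableAutomaton δ q) := by
  rintro ⟨p, hp⟩ ⟨r, hr⟩
  obtain ⟨w, hw⟩ := (hq p hp).trans hr
  exact ⟨w, Subtype.ext ((coe_dstar_reachableAutomaton _ w).trans hw)⟩

theorem IsRecurrent.exists_tendsto_visits_div [Finite Q] [DecidableEq Q] [Fintype A]
    [DecidableEq A] {μ : A → ℝ} (hμpos : ∀ a, 0 < μ a) (hμ : ∑ a, μ a = 1)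
    (hq : IsRecurrent δ q) :
    ∃ c : ℝ, 0 < c ∧ ∀ X, BNormal μ X →
      Tendsto (fun n => (visits δ q X q n : ℝ) / n) atTop (𝓝 c) := by
  let q' : {p // Reaches δ q p} := ⟨q, Reaches.refl δ q⟩
  obtain ⟨c, hc, hlim⟩ := hq.isStronglyConnected.exists_tendsto_birkhoffAverage hμpos hμ
    (f := Pi.single q' 1) (Pi.single_pos.2 one_pos)
  refine ⟨c, hc, fun X hX => (hlim X hX q').congr fun n => ?_⟩
  have hsemi : Function.Semiconj (Prod.map Subtype.val id) (skewShift (reachableAutomaton δ q))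
      (skewShift δ) := fun _ => rfl
  have hsingle : (Pi.single q' 1 ∘ Prod.fst : {p // Reaches δ q p} × (ℕ → A) → ℝ) =
      (Pi.single q 1 ∘ Prod.fst) ∘ Prod.map Subtype.val id := by
    funext y
    simp [Pi.single_apply, Subtype.ext_iff, q']
  rw [visits_div_eq_birkhoffAverage, hsingle]
  exact birkhoffAverage_comp_of_semiconj ℝ hsemi _ n (q', X)

lemma exists_word_forall_not_reaches [Finite Q] (hq : ¬IsRecurrent δ q) :
    ∃ w, ∀ p, ¬Reaches δ (dstar δ p w) q := by
  have := Fintype.ofFinite Q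
  obtain ⟨r, ⟨u, hu⟩, hr⟩ : ∃ r, Reaches δ q r ∧ ¬Reaches δ r q := by
    simpa [IsRecurrent] using hq
  -- Extending a word keeps `q` unreachable where it already was, so states can be treated in turn.
  suffices h : ∀ S : Finset Q, ∃ w, ∀ p ∈ S, ¬Reaches δ (dstar δ p w) q by
    obtain ⟨w, hw⟩ := h Finset.univ
    exact ⟨w, fun p => hw p (Finset.mem_univ p)⟩
  intro S
  classical
  induction S using Finset.induction_on with
  | empty => exact ⟨[], by simp⟩
  | insert p S _ ih =>
    obtain ⟨w, hw⟩ := ih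
    by_cases hp : Reaches δ (dstar δ p w) q
    · obtain ⟨v, hv⟩ := hp
      refine ⟨w ++ (v ++ u), Finset.forall_mem_insert _ _ _ |>.2 ⟨?_, fun s hs hreach => ?_⟩⟩
      · simpa [dstar_append, hv, hu] using hr
      · rw [dstar_append] at hreach
        exact hw s hs (Reaches.trans ⟨v ++ u, rfl⟩ hreach)
    · exact ⟨w, Finset.forall_mem_insert _ _ _ |>.2 ⟨hp, hw⟩⟩

lemma BNormal.eventually_dstar_pref_ne [Finite Q] [DecidableEq A] {μ : A → ℝ} {X : ℕ → A}
    (hμpos : ∀ a, 0 < μ a) (hX : BNormal μ X) (hq : ¬IsRecurrent δ q) (p : Q) :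
    ∀ᶠ n in atTop, dstar δ p (pref X n) ≠ q := by
  obtain ⟨w, hw⟩ := exists_word_forall_not_reaches hq
  obtain ⟨m, hm⟩ := hX.exists_shift_mem_wordCylinder hμpos w
  filter_upwards [eventually_ge_atTop (m + w.length)] with n hn hnq
  obtain ⟨k, rfl⟩ := Nat.exists_eq_add_of_le hn
  rw [pref_add, pref_add, hm, dstar_append, dstar_append] at hnq
  exact hw _ ⟨_, hnq⟩

lemma exists_visits_eq_of_eventually_ne [DecidableEq Q] {qI : Q} {X : ℕ → A}
    (h : ∀ᶠ n in atTop, dstar δ qI (pref X n) ≠ q) :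
    ∃ N, ∀ n, N ≤ n → visits δ qI X q n = visits δ qI X q N := by
  obtain ⟨N, hN⟩ := eventually_atTop.1 h
  refine ⟨N, fun n hn => ?_⟩
  induction n, hn using Nat.le_induction with
  | base => rfl
  | succ n hn ih =>
    rw [← ih]
    simp [visits, Finset.range_add_one, Finset.filter_insert, hN n hn]

lemma tendsto_visits_div_shift_iff [Finite Q] [DecidableEq Q] {qI : Q} {X : ℕ → A} (N : ℕ)
    {c : ℝ} :
    Tendsto (fun n => (visits δ (dstar δ qI (pref X N)) (shift^[N] X) q n : ℝ) / n) atTop (𝓝 c) ↔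
      Tendsto (fun n => (visits δ qI X q n : ℝ) / n) atTop (𝓝 c) := by
  simp only [visits_div_eq_birkhoffAverage, ← skewShift_iterate]
  exact tendsto_birkhoffAverage_iterate_iff (isBounded_range_comp_fst _) N _

end Recurrent

/-- on `μ`-normal input, each state of a DFA is visited either finitely
often or with a fixed positive asymptotic frequency `π_q` independent of the normal
input sequence. -/
theorem state_visit_frequency
    {Q A : Type*} [Fintype Q] [DecidableEq Q] [Fintype A] [DecidableEq A]
    (μ : A → ℝ) (hμpos : ∀ a, 0 < μ a) (hμsum : ∑ a, μ a = 1)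
    (δ : Q → A → Q) (qI : Q) :
    ∀ q : Q, ∃ πq : ℝ, 0 ≤ πq ∧
      ∀ X : ℕ → A, BNormal μ X →
        (∃ N, ∀ n, N ≤ n → visits δ qI X q n = visits δ qI X q N) ∨
        (0 < πq ∧
          Tendsto (fun n => (visits δ qI X q n : ℝ) / n) atTop (𝓝 πq)) := by
  intro q
  by_cases hq : IsRecurrent δ q
  · obtain ⟨c, hc, hlim⟩ := hq.exists_tendsto_visits_div hμpos hμsum
    refine ⟨c, hc.le, fun X hX => ?_⟩
    by_cases hvisit : ∃ N, dstar δ qI (pref X N) = q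
    · obtain ⟨N, rfl⟩ := hvisit
      exact Or.inr ⟨hc, (tendsto_visits_div_shift_iff N).1 (hlim _ (hX.shift_iterate N))⟩
    · exact Or.inl (exists_visits_eq_of_eventually_ne (Eventually.of_forall (not_exists.1 hvisit)))
  · exact ⟨0, le_rfl, fun X hX =>
      Or.inl (exists_visits_eq_of_eventually_ne (hX.eventually_dstar_pref_ne hμpos hq qI))⟩
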